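/- Score approximation from an approximation of ξ (network-free form of the score approximation theorem): let ε ∈ (0,1), T > 0, S > 0, and let ḡ : ℝ^k × [0,T] → ℝ^k be measurable with ḡ(z,t) = 0 whenever ‖z‖₂ > S and sup over ‖z‖₂ ≤ S and t ∈ [0,T] of ‖ḡ(z,t) − ξ(z,t)‖_∞ ≤ ε. Assume the truncation bound ∫ ‖ξ(βᵀΛ_t⁻¹r, t)‖₂² · 1{‖βᵀΛ_t⁻¹r‖₂ > S} p_t(r) dr ≤ ε² for all t ∈ [0,T]. Define s̄(r, t) = α_t Λ_t⁻¹ β ḡ(βᵀ Λ_t⁻¹ r, t) − Λ_t⁻¹ r. Then for every t ∈ [0,T]: (∫_{ℝ^d} ‖s̄(r, t) − ∇ log p_t(r)‖₂² p_t(r) dr)^{1/2} ≤ (√k + 1) ε / min{σ_d², 1}. -/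

import Mathlib

open MeasureTheory Matrix

noncomputable section

/-- Euclidean (ℓ²) norm on `Fin n → ℝ`. -/
def eucNorm {n : ℕ} (x : Fin n → ℝ) : ℝ := Real.sqrt (∑ i, x i ^ 2)

/-- The `n`-dimensional Gaussian density `φ(x; μ, S)`. -/
def gaussD (n : ℕ) (x μ : Fin n → ℝ) (S : Matrix (Fin n) (Fin n) ℝ) : ℝ :=
  (2 * Real.pi) ^ (-(n : ℝ) / 2) * S.det ^ (-(1 : ℝ) / 2) *
    Real.exp (-((x - μ) ⬝ᵥ (S⁻¹ *ᵥ (x - μ))) / 2)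

/-- Gradient as the vector of partial derivatives. -/
def gradv {n : ℕ} (f : (Fin n → ℝ) → ℝ) (x : Fin n → ℝ) : Fin n → ℝ :=
  fun i => fderiv ℝ f x (Pi.single i 1)

/-- `α_t = e^{-t/2}`. -/
def af (t : ℝ) : ℝ := Real.exp (-t / 2)

/-- `h_t = 1 - α_t²`. -/
def hf (t : ℝ) : ℝ := 1 - af t ^ 2

/-- `Λ_t = diag(h_t + σ_i² α_t²)`. -/
def Lam {d : ℕ} (σ : Fin d → ℝ) (t : ℝ) : Matrix (Fin d) (Fin d) ℝ :=
  Matrix.diagonal fun i => hf t + σ i ^ 2 * af t ^ 2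

/-- `Λ_t^{-1/2}`. -/
def LamInvSqrt {d : ℕ} (σ : Fin d → ℝ) (t : ℝ) : Matrix (Fin d) (Fin d) ℝ :=
  Matrix.diagonal fun i => (Real.sqrt (hf t + σ i ^ 2 * af t ^ 2))⁻¹

/-- `Γ_t = (βᵀ Λ_t⁻¹ β)⁻¹`. -/
def Gam {d k : ℕ} (β : Matrix (Fin d) (Fin k) ℝ) (σ : Fin d → ℝ) (t : ℝ) :
    Matrix (Fin k) (Fin k) ℝ :=
  (βᵀ * (Lam σ t)⁻¹ * β)⁻¹

/-- `T_t = Λ_t^{-1/2} β Γ_t βᵀ Λ_t^{-1/2}`. -/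
def Tproj {d k : ℕ} (β : Matrix (Fin d) (Fin k) ℝ) (σ : Fin d → ℝ) (t : ℝ) :
    Matrix (Fin d) (Fin d) ℝ :=
  LamInvSqrt σ t * β * Gam β σ t * βᵀ * LamInvSqrt σ t

/-- Time-`t` marginal density `p_t`. -/
def pT {d k : ℕ} (β : Matrix (Fin d) (Fin k) ℝ) (σ : Fin d → ℝ)
    (pfac : (Fin k → ℝ) → ℝ) (t : ℝ) (r : Fin d → ℝ) : ℝ :=
  ∫ f : Fin k → ℝ, gaussD d r (af t • (β *ᵥ f)) (Lam σ t) * pfac f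

/-- Smoothed factor density `p_t^fac`. -/
def pTfac {d k : ℕ} (β : Matrix (Fin d) (Fin k) ℝ) (σ : Fin d → ℝ)
    (pfac : (Fin k → ℝ) → ℝ) (t : ℝ) (y : Fin k → ℝ) : ℝ :=
  ∫ f : Fin k → ℝ, gaussD k y (af t • f) (Gam β σ t) * pfac f

/-- The posterior-mean-type function `ξ(z, t)`. -/
def xiFun {d k : ℕ} (β : Matrix (Fin d) (Fin k) ℝ) (σ : Fin d → ℝ)
    (pfac : (Fin k → ℝ) → ℝ) (t : ℝ) (z : Fin k → ℝ) : Fin k → ℝ :=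
  (∫ f : Fin k → ℝ, gaussD k (Gam β σ t *ᵥ z) (af t • f) (Gam β σ t) * pfac f)⁻¹ •
    ∫ f : Fin k → ℝ, (gaussD k (Gam β σ t *ᵥ z) (af t • f) (Gam β σ t) * pfac f) • f

/-!
`p_t` is a Gaussian mixture, so by Tweedie's formula its score at `r` is
`Λ_t⁻¹ (α_t β E[f | r] - r)`. The generalised least squares statistic `Γ_t βᵀ Λ_t⁻¹ r` is
sufficient for the factor, which identifies `E[f | r]` with `ξ(βᵀ Λ_t⁻¹ r, t)`. Hence the score
error is exactly `α_t Λ_t⁻¹ β (ḡ - ξ)`, whose norm is at most that of `ḡ - ξ` divided by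
`min {σ_d², 1}`. In the ball of radius `S` each coordinate of `ḡ - ξ` is at most `ε`; outside it
`ḡ - ξ = -ξ`, which is what the truncation bound controls. Since `ξ` is a conditional mean, Jensen's
inequality and the second moment of the factor make all these integrals finite.
-/

lemma eucNorm_nonneg {n : ℕ} (x : Fin n → ℝ) : 0 ≤ eucNorm x := Real.sqrt_nonneg _

lemma eucNorm_sq {n : ℕ} (x : Fin n → ℝ) : eucNorm x ^ 2 = ∑ i, x i ^ 2 :=
  Real.sq_sqrt (Finset.sum_nonneg fun _ _ => sq_nonneg _)

lemma eucNorm_sq_eq_dotProduct {n : ℕ} (x : Fin n → ℝ) : eucNorm x ^ 2 = x ⬝ᵥ x := by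
  simp only [eucNorm_sq, dotProduct, ← sq]

lemma continuous_eucNorm {n : ℕ} : Continuous (eucNorm : (Fin n → ℝ) → ℝ) := by
  unfold eucNorm
  fun_prop

lemma eucNorm_neg {n : ℕ} (x : Fin n → ℝ) : eucNorm (-x) = eucNorm x := by
  simp only [eucNorm, Pi.neg_apply, neg_sq]

lemma eucNorm_smul {n : ℕ} (a : ℝ) (x : Fin n → ℝ) : eucNorm (a • x) = |a| * eucNorm x := by
  rw [← sq_eq_sq₀ (eucNorm_nonneg _) (mul_nonneg (abs_nonneg a) (eucNorm_nonneg x)), mul_pow,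
    sq_abs, eucNorm_sq, eucNorm_sq, Finset.mul_sum]
  simp only [Pi.smul_apply, smul_eq_mul, mul_pow]

lemma norm_le_eucNorm {n : ℕ} (x : Fin n → ℝ) : ‖x‖ ≤ eucNorm x := by
  refine (pi_norm_le_iff_of_nonneg (eucNorm_nonneg x)).2 fun i => Real.abs_le_sqrt ?_
  exact Finset.single_le_sum (f := fun i => x i ^ 2) (fun j _ => sq_nonneg (x j))
    (Finset.mem_univ i)

lemma eucNorm_sq_le_of_abs_le {n : ℕ} {x : Fin n → ℝ} {ε : ℝ} (hx : ∀ i, |x i| ≤ ε) :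
    eucNorm x ^ 2 ≤ n * ε ^ 2 := by
  calc eucNorm x ^ 2 = ∑ i, |x i| ^ 2 := by simp only [eucNorm_sq, sq_abs]
    _ ≤ ∑ _i : Fin n, ε ^ 2 := by gcongr with i; exact hx i
    _ = n * ε ^ 2 := by simp

lemma eucNorm_mulVec_of_transpose_mul_self_eq_one {m n : ℕ} {β : Matrix (Fin m) (Fin n) ℝ}
    (hβ : βᵀ * β = 1) (v : Fin n → ℝ) : eucNorm (β *ᵥ v) = eucNorm v := by
  have h : (β *ᵥ v) ⬝ᵥ (β *ᵥ v) = v ⬝ᵥ v := by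
    rw [dotProduct_mulVec, ← mulVec_transpose, mulVec_mulVec, hβ, one_mulVec]
  simp only [dotProduct, ← sq] at h
  simp only [eucNorm, h]

lemma mul_eucNorm_le_eucNorm_diagonal_mulVec {n : ℕ} {D : Fin n → ℝ} {m : ℝ} (hm : 0 ≤ m)
    (hD : ∀ i, m ≤ D i) (v : Fin n → ℝ) : m * eucNorm v ≤ eucNorm (diagonal D *ᵥ v) := by
  rw [← sq_le_sq₀ (mul_nonneg hm (eucNorm_nonneg v)) (eucNorm_nonneg _), mul_pow, eucNorm_sq,
    eucNorm_sq, Finset.mul_sum]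
  simp only [mulVec_diagonal, mul_pow]
  gcongr with i
  exact hD i

/-- The functional `v ↦ w ⬝ᵥ v`, depending continuously and linearly on `w`; a function with
derivative `dotProductL w` has gradient `w`. -/
def dotProductL {n : ℕ} : (Fin n → ℝ) →L[ℝ] (Fin n → ℝ) →L[ℝ] ℝ :=
  (dotProductBilin ℝ ℝ).toContinuousBilinearMap

lemma dotProductL_apply {n : ℕ} (w v : Fin n → ℝ) : dotProductL w v = w ⬝ᵥ v := rfl

lemma gradv_eq_of_hasFDerivAt {n : ℕ} {f : (Fin n → ℝ) → ℝ} {w x : Fin n → ℝ}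
    (hf : HasFDerivAt f (dotProductL w) x) : gradv f x = w := by
  ext i
  rw [gradv, hf.fderiv, dotProductL_apply, dotProduct_single_one]

/-- The linear map `v ↦ A *ᵥ v` as a continuous linear map. -/
def mulVecL {m n : ℕ} (A : Matrix (Fin m) (Fin n) ℝ) : (Fin n → ℝ) →L[ℝ] (Fin m → ℝ) :=
  A.mulVecLin.toContinuousLinearMap

lemma mulVecL_apply {m n : ℕ} (A : Matrix (Fin m) (Fin n) ℝ) (v : Fin n → ℝ) :
    mulVecL A v = A *ᵥ v := rfl

lemma eucNorm_weightedMean_sq_mul_integral_le {X : Type*} [MeasurableSpace X] {μ : Measure X}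
    {n : ℕ} {w : X → ℝ} {F : X → Fin n → ℝ} (hw : 0 ≤ w) (hw_ne : ∫ x, w x ∂μ ≠ 0)
    (hF : Integrable (fun x => w x • F x) μ)
    (hF2 : Integrable (fun x => w x * eucNorm (F x) ^ 2) μ) :
    eucNorm ((∫ x, w x ∂μ)⁻¹ • ∫ x, w x • F x ∂μ) ^ 2 * ∫ x, w x ∂μ ≤
      ∫ x, w x * eucNorm (F x) ^ 2 ∂μ := by
  have hw_int : Integrable w μ := .of_integral_ne_zero hw_ne
  set W := ∫ x, w x ∂μ
  set m := W⁻¹ • ∫ x, w x • F x ∂μ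
  have hmean : ∫ x, w x • F x ∂μ = W • m := (smul_inv_smul₀ hw_ne _).symm
  have hexpand (x : X) : w x * eucNorm (F x - m) ^ 2 =
      w x * eucNorm (F x) ^ 2 - 2 * dotProductL m (w x • F x) + w x * eucNorm m ^ 2 := by
    simp only [eucNorm_sq_eq_dotProduct, map_smul, dotProductL_apply, smul_eq_mul, sub_dotProduct,
      dotProduct_sub, dotProduct_comm (F x) m]
    ring
  have hnonneg : 0 ≤ ∫ x, w x * eucNorm (F x - m) ^ 2 ∂μ :=
    integral_nonneg fun x => mul_nonneg (hw x) (sq_nonneg _)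
  have hcross := ((dotProductL m).integrable_comp hF).const_mul 2
  have hintegral : ∫ x, w x * eucNorm (F x - m) ^ 2 ∂μ =
      ∫ x, w x * eucNorm (F x) ^ 2 ∂μ - eucNorm m ^ 2 * W := by
    simp only [hexpand]
    rw [integral_add (f := fun x => w x * eucNorm (F x) ^ 2 - 2 * dotProductL m (w x • F x))
      (hF2.sub hcross) (hw_int.mul_const _), integral_sub hF2 hcross, integral_const_mul,
      integral_mul_const, (dotProductL m).integral_comp_comm hF, hmean, map_smul,
      dotProductL_apply, ← eucNorm_sq_eq_dotProduct, smul_eq_mul]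
    ring
  linarith

section TruncatedApproximation

variable {X : Type*} {k : ℕ} {P : X → ℝ} {u v : X → Fin k → ℝ} {s : Set X} {ε : ℝ}

lemma eucNorm_sub_sq_mul_le (hP : 0 ≤ P) (hu : ∀ x ∈ s, u x = 0)
    (huv : ∀ x ∉ s, ∀ i, |u x i - v x i| ≤ ε) (x : X) :
    eucNorm (u x - v x) ^ 2 * P x ≤
      k * ε ^ 2 * P x + s.indicator (fun x => eucNorm (v x) ^ 2 * P x) x := by
  have hmass : 0 ≤ k * ε ^ 2 * P x := mul_nonneg (by positivity) (hP x)
  by_cases hx : x ∈ s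
  · rw [hu x hx, zero_sub, eucNorm_neg, Set.indicator_of_mem hx]
    linarith
  · rw [Set.indicator_of_notMem hx, add_zero]
    exact mul_le_mul_of_nonneg_right (eucNorm_sq_le_of_abs_le (huv x hx)) (hP x)

variable [MeasurableSpace X] {μ : Measure X}

lemma integrable_and_integral_eucNorm_sub_sq_mul_le (hs : MeasurableSet s) (hP : 0 ≤ P)
    (hP_one : ∫ x, P x ∂μ = 1) (huv_meas : AEStronglyMeasurable (fun x => u x - v x) μ)
    (hv : Integrable (fun x => eucNorm (v x) ^ 2 * P x) μ) (hu : ∀ x ∈ s, u x = 0)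
    (huv : ∀ x ∉ s, ∀ i, |u x i - v x i| ≤ ε)
    (htail : ∫ x, s.indicator (fun x => eucNorm (v x) ^ 2 * P x) x ∂μ ≤ ε ^ 2) :
    Integrable (fun x => eucNorm (u x - v x) ^ 2 * P x) μ ∧
      ∫ x, eucNorm (u x - v x) ^ 2 * P x ∂μ ≤ (k + 1) * ε ^ 2 := by
  have hP_int : Integrable P μ := integrable_of_integral_eq_one hP_one
  have hmass := hP_int.const_mul (k * ε ^ 2)
  have hbound := eucNorm_sub_sq_mul_le hP hu huv
  have hint : Integrable (fun x => eucNorm (u x - v x) ^ 2 * P x) μ := by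
    refine (hmass.add (hv.indicator hs)).mono'
      (((continuous_eucNorm.comp_aestronglyMeasurable huv_meas).pow 2).mul
        hP_int.aestronglyMeasurable) (.of_forall fun x => ?_)
    rw [Real.norm_of_nonneg (mul_nonneg (sq_nonneg _) (hP x))]
    exact hbound x
  refine ⟨hint, ?_⟩
  calc ∫ x, eucNorm (u x - v x) ^ 2 * P x ∂μ
      ≤ ∫ x, k * ε ^ 2 * P x + s.indicator (fun x => eucNorm (v x) ^ 2 * P x) x ∂μ :=
        integral_mono hint (hmass.add (hv.indicator hs)) hbound
    _ = k * ε ^ 2 + ∫ x, s.indicator (fun x => eucNorm (v x) ^ 2 * P x) x ∂μ := by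
        rw [integral_add hmass (hv.indicator hs), integral_const_mul, hP_one, mul_one]
    _ ≤ (k + 1) * ε ^ 2 := by linarith

end TruncatedApproximation

lemma integrable_and_mul_sqrt_integral_sq_mul_le {X : Type*} [MeasurableSpace X] {μ : Measure X}
    {P a b : X → ℝ} {m : ℝ} (hm : 0 < m) (hP : 0 ≤ P) (ha : 0 ≤ a) (hab : ∀ x, m * a x ≤ b x)
    (ha_meas : AEStronglyMeasurable (fun x => a x ^ 2 * P x) μ)
    (hb : Integrable (fun x => b x ^ 2 * P x) μ) :
    Integrable (fun x => a x ^ 2 * P x) μ ∧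
      m * √(∫ x, a x ^ 2 * P x ∂μ) ≤ √(∫ x, b x ^ 2 * P x ∂μ) := by
  have hbound (x : X) : m ^ 2 * (a x ^ 2 * P x) ≤ b x ^ 2 * P x := by
    rw [← mul_assoc, ← mul_pow]
    exact mul_le_mul_of_nonneg_right (pow_le_pow_left₀ (mul_nonneg hm.le (ha x)) (hab x) 2) (hP x)
  have hint : Integrable (fun x => m ^ 2 * (a x ^ 2 * P x)) μ := by
    refine hb.mono' (ha_meas.const_mul _) (.of_forall fun x => ?_)
    rw [Real.norm_of_nonneg (mul_nonneg (sq_nonneg m) (mul_nonneg (sq_nonneg _) (hP x)))]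
    exact hbound x
  refine ⟨(integrable_const_mul_iff (pow_pos hm 2).ne'.isUnit _).1 hint, ?_⟩
  rw [← Real.sqrt_sq hm.le, ← Real.sqrt_mul (sq_nonneg m), ← integral_const_mul]
  exact Real.sqrt_le_sqrt (integral_mono hint hb hbound)

lemma dotProduct_inv_mulVec_comm {n : ℕ} {S : Matrix (Fin n) (Fin n) ℝ} (hS : S.IsSymm)
    (u v : Fin n → ℝ) : u ⬝ᵥ (S⁻¹ *ᵥ v) = v ⬝ᵥ (S⁻¹ *ᵥ u) := by
  rw [dotProduct_mulVec, ← mulVec_transpose, transpose_nonsing_inv, hS, dotProduct_comm]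

section GaussianDensity

variable {n : ℕ} {S : Matrix (Fin n) (Fin n) ℝ}

lemma gaussD_self (x : Fin n → ℝ) :
    gaussD n x x S = (2 * Real.pi) ^ (-(n : ℝ) / 2) * S.det ^ (-(1 : ℝ) / 2) := by
  simp only [gaussD, sub_self, zero_dotProduct, neg_zero, zero_div, Real.exp_zero, mul_one]

lemma gaussD_eq_gaussD_self_mul_exp (y x μ : Fin n → ℝ) :
    gaussD n x μ S = gaussD n y y S * Real.exp (-((x - μ) ⬝ᵥ (S⁻¹ *ᵥ (x - μ))) / 2) := by
  rw [gaussD_self, gaussD]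

lemma gaussD_pos (hS : 0 < S.det) (x μ : Fin n → ℝ) : 0 < gaussD n x μ S := by
  have := Real.pi_pos
  unfold gaussD
  positivity

lemma gaussD_le_gaussD_self (hS : S.PosDef) (x μ y : Fin n → ℝ) :
    gaussD n x μ S ≤ gaussD n y y S := by
  rw [gaussD_eq_gaussD_self_mul_exp y]
  refine mul_le_of_le_one_right (gaussD_pos hS.det_pos y y).le (Real.exp_le_one_iff.2 ?_)
  have : 0 ≤ (x - μ) ⬝ᵥ (S⁻¹ *ᵥ (x - μ)) := hS.inv.posSemidef.dotProduct_mulVec_nonneg _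
  linarith

lemma continuous_gaussD {X : Type*} [TopologicalSpace X] {x μ : X → Fin n → ℝ}
    (hx : Continuous x) (hμ : Continuous μ) : Continuous fun a => gaussD n (x a) (μ a) S := by
  have : Continuous fun a => (x a - μ a) ⬝ᵥ (S⁻¹ *ᵥ (x a - μ a)) :=
    (hx.sub hμ).dotProduct (continuous_const.matrix_mulVec (hx.sub hμ))
  unfold gaussD
  fun_prop

lemma gaussD_mulVec_zero_mul_transpose {B : Matrix (Fin n) (Fin n) ℝ} (hB : B.det ≠ 0)
    (y : Fin n → ℝ) :
    gaussD n (B *ᵥ y) 0 (B * Bᵀ) =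
      |B.det⁻¹| * ∏ i, ProbabilityTheory.gaussianPDFReal 0 1 (y i) := by
  have hBy : (B *ᵥ y) ⬝ᵥ ((B * Bᵀ)⁻¹ *ᵥ (B *ᵥ y)) = ∑ i, y i ^ 2 := by
    rw [Matrix.mul_inv_rev, mulVec_mulVec, Matrix.mul_assoc, nonsing_inv_mul B hB.isUnit,
      Matrix.mul_one, ← transpose_nonsing_inv, mulVec_transpose, dotProduct_comm,
      ← dotProduct_mulVec, mulVec_mulVec, nonsing_inv_mul B hB.isUnit, one_mulVec]
    simp only [dotProduct, sq]
  have hdet : (B * Bᵀ).det ^ (-(1 : ℝ) / 2) = |B.det⁻¹| := by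
    rw [det_mul, det_transpose, ← sq, ← sq_abs, abs_inv, ← Real.rpow_natCast,
      ← Real.rpow_mul (abs_nonneg _), ← Real.rpow_neg_one]
    norm_num
  have hpi : (2 * Real.pi) ^ (-(n : ℝ) / 2) = (√(2 * Real.pi))⁻¹ ^ n := by
    rw [Real.sqrt_eq_rpow, ← Real.rpow_neg (by positivity), ← Real.rpow_mul_natCast (by positivity)]
    ring_nf
  rw [gaussD, sub_zero, hBy, hdet, hpi]
  simp only [ProbabilityTheory.gaussianPDFReal, NNReal.coe_one, mul_one, sub_zero,
    Finset.prod_mul_distrib, Finset.prod_const, Finset.card_univ, Fintype.card_fin, ← Real.exp_sum,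
    ← Finset.sum_div, Finset.sum_neg_distrib]
  ring

open scoped MatrixOrder in
lemma exists_eq_mul_transpose_of_posDef (hS : S.PosDef) :
    ∃ B : Matrix (Fin n) (Fin n) ℝ, B.det ≠ 0 ∧ S = B * Bᵀ := by
  obtain ⟨B, rfl⟩ := CStarAlgebra.nonneg_iff_eq_mul_star_self.1 hS.posSemidef.nonneg
  refine ⟨B, fun h => hS.det_pos.ne' ?_, ?_⟩
  · rw [det_mul, h, zero_mul]
  · rw [star_eq_conjTranspose, conjTranspose_eq_transpose_of_trivial]

lemma integral_gaussD (hS : S.PosDef) (μ : Fin n → ℝ) : ∫ x, gaussD n x μ S = 1 := by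
  obtain ⟨B, hB, rfl⟩ := exists_eq_mul_transpose_of_posDef hS
  have hdet : 0 < |B.det⁻¹| := abs_pos.2 (inv_ne_zero hB)
  have hcenter : ∫ x, gaussD n x μ (B * Bᵀ) = ∫ x, gaussD n x 0 (B * Bᵀ) := by
    rw [← integral_add_right_eq_self _ μ]
    simp only [gaussD, add_sub_cancel_right, sub_zero]
  have hscale : |B.det⁻¹| * ∫ x, gaussD n x 0 (B * Bᵀ) = ∫ y, gaussD n (B *ᵥ y) 0 (B * Bᵀ) := by
    have hmap := integral_map (μ := volume) (mulVecL B).continuous.aemeasurable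
      (continuous_gaussD (S := B * Bᵀ) continuous_id
        (continuous_const (y := 0))).aestronglyMeasurable
    have hvol : volume.map (mulVecL B) = ENNReal.ofReal |B.det⁻¹| • volume :=
      Real.map_matrix_volume_pi_eq_smul_volume_pi hB
    rw [hvol, integral_smul_measure, ENNReal.toReal_ofReal hdet.le, smul_eq_mul] at hmap
    exact hmap
  have hstd : ∫ y : Fin n → ℝ, ∏ i, ProbabilityTheory.gaussianPDFReal 0 1 (y i) = 1 := by
    rw [integral_fintype_prod_volume_eq_prod fun _ => ProbabilityTheory.gaussianPDFReal 0 1]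
    exact Finset.prod_eq_one fun _ _ =>
      ProbabilityTheory.integral_gaussianPDFReal_eq_one 0 one_ne_zero
  rw [hcenter]
  refine mul_left_cancel₀ hdet.ne' ?_
  simp only [hscale, gaussD_mulVec_zero_mul_transpose hB, integral_const_mul, hstd]

lemma hasFDerivAt_gaussD (hS : S.IsSymm) (x μ : Fin n → ℝ) :
    HasFDerivAt (fun x => gaussD n x μ S)
      (dotProductL (gaussD n x μ S • (S⁻¹ *ᵥ (μ - x)))) x := by
  have hsub : HasFDerivAt (fun x => x - μ) (ContinuousLinearMap.id ℝ _) x :=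
    (hasFDerivAt_id x).sub_const μ
  have hquad := dotProductL.hasFDerivAt_of_bilinear hsub ((mulVecL S⁻¹).hasFDerivAt.comp x hsub)
  refine (((hquad.neg.mul_const (1 / 2 : ℝ)).exp).const_mul (gaussD n 0 0 S)).congr_of_eventuallyEq
    (.of_forall fun y => ?_) |>.congr_fderiv ?_
  · rw [gaussD_eq_gaussD_self_mul_exp 0]
    simp only [dotProductL_apply, mulVecL_apply, Function.comp_apply, Pi.neg_apply, mul_one_div]
  · ext1 v
    rw [gaussD_eq_gaussD_self_mul_exp 0 x μ]
    have hneg : (S⁻¹ *ᵥ (μ - x)) ⬝ᵥ v = -(v ⬝ᵥ (S⁻¹ *ᵥ (x - μ))) := by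
      rw [dotProduct_comm, ← neg_sub x μ, mulVec_neg, dotProduct_neg]
    simp only [_root_.smul_apply, _root_.neg_apply, _root_.add_apply,
      ContinuousLinearMap.precompR_apply, ContinuousLinearMap.precompL_apply,
      ContinuousLinearMap.compL_apply, ContinuousLinearMap.comp_apply,
      ContinuousLinearMap.id_apply, map_smul, Function.comp_apply, Pi.neg_apply, mulVecL_apply,
      dotProductL_apply, smul_eq_mul, mul_one_div, hneg,
      dotProduct_inv_mulVec_comm hS (x - μ) v]
    ring

end GaussianDensity

/-- The unnormalised Gaussian mixture `r ↦ ∫ φ(r; A f, S) q(f) df` with linear means. For a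
density `q = p` it is the density of `A f + noise`; vector-valued weights such as `q(f) = p(f) f`
give the numerators of posterior expectations. -/
def gaussMix {d k : ℕ} {E : Type*} [NormedAddCommGroup E] [NormedSpace ℝ E]
    (A : Matrix (Fin d) (Fin k) ℝ) (S : Matrix (Fin d) (Fin d) ℝ) (q : (Fin k → ℝ) → E)
    (r : Fin d → ℝ) : E :=
  ∫ f, gaussD d r (A *ᵥ f) S • q f

/-- The conditional expectation of the factor `f ∼ p` given the observation
`r = A f + noise` with noise covariance `S`. -/
def posteriorMean {d k : ℕ} (A : Matrix (Fin d) (Fin k) ℝ) (S : Matrix (Fin d) (Fin d) ℝ)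
    (p : (Fin k → ℝ) → ℝ) (r : Fin d → ℝ) : Fin k → ℝ :=
  (gaussMix A S p r)⁻¹ • gaussMix A S (fun f => p f • f) r

section GaussianMixture

variable {d k : ℕ} {A : Matrix (Fin d) (Fin k) ℝ} {S : Matrix (Fin d) (Fin d) ℝ}
  {E : Type*} [NormedAddCommGroup E] [NormedSpace ℝ E] {q : (Fin k → ℝ) → E}
  {p : (Fin k → ℝ) → ℝ}

lemma integrable_gaussD_smul (hS : S.PosDef) (hq : Integrable q) (r : Fin d → ℝ) :
    Integrable fun f => gaussD d r (A *ᵥ f) S • q f := by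
  refine hq.bdd_smul (gaussD d 0 0 S)
    (continuous_gaussD continuous_const (mulVecL A).continuous).aestronglyMeasurable
    (.of_forall fun f => ?_)
  rw [Real.norm_of_nonneg (gaussD_pos hS.det_pos _ _).le]
  exact gaussD_le_gaussD_self hS _ _ _

lemma integrable_gaussD_smul_prod (hS : S.PosDef) (hq : Integrable q) :
    Integrable (fun x : (Fin d → ℝ) × (Fin k → ℝ) => gaussD d x.1 (A *ᵥ x.2) S • q x.2)
      (volume.prod volume) := by
  have hnorm (f : Fin k → ℝ) : ∫ r, ‖gaussD d r (A *ᵥ f) S • q f‖ = ‖q f‖ := by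
    simp only [norm_smul, Real.norm_of_nonneg (gaussD_pos hS.det_pos _ _).le, integral_mul_const,
      integral_gaussD hS, one_mul]
  refine (integrable_prod_iff' ?_).2 ⟨.of_forall fun f => ?_, ?_⟩
  · exact (continuous_gaussD continuous_fst
      ((mulVecL A).continuous.comp continuous_snd)).aestronglyMeasurable.smul
        hq.aestronglyMeasurable.comp_snd
  · have : Integrable fun r => gaussD d r (A *ᵥ f) S :=
      integrable_of_integral_eq_one (integral_gaussD hS _)
    exact this.smul_const (q f)
  · simpa only [hnorm] using hq.norm

lemma integrable_gaussMix (hS : S.PosDef) (hq : Integrable q) : Integrable (gaussMix A S q) :=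
  (integrable_gaussD_smul_prod hS hq).integral_prod_left

lemma integral_gaussMix [CompleteSpace E] (hS : S.PosDef) (hq : Integrable q) :
    ∫ r, gaussMix A S q r = ∫ f, q f := by
  simp only [gaussMix]
  rw [integral_integral_swap (integrable_gaussD_smul_prod hS hq)]
  simp only [integral_smul_const, integral_gaussD hS, one_smul]

lemma gaussMix_pos (hS : S.PosDef) (hp : 0 ≤ p) (hp_pos : 0 < ∫ f, p f) (r : Fin d → ℝ) :
    0 < gaussMix A S p r := by
  have hp_int : Integrable p := .of_integral_ne_zero hp_pos.ne'
  have hG (f : Fin k → ℝ) : 0 < gaussD d r (A *ᵥ f) S := gaussD_pos hS.det_pos _ _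
  have hsupp : (Function.support fun f => gaussD d r (A *ᵥ f) S * p f) = Function.support p := by
    ext f
    simp only [Function.mem_support, ne_eq, mul_eq_zero, (hG f).ne', false_or]
  simp only [gaussMix, smul_eq_mul]
  rw [integral_pos_iff_support_of_nonneg (fun f => mul_nonneg (hG f).le (hp f))
    (integrable_gaussD_smul hS hp_int r), hsupp]
  exact (integral_pos_iff_support_of_nonneg hp hp_int).1 hp_pos

lemma gaussMix_mulVec_sub_smul (hS : S.PosDef) (hp : Integrable p)
    (hpf : Integrable fun f => p f • f) (r : Fin d → ℝ) :
    gaussMix A S (fun f => mulVecL A (p f • f) - p f • r) r =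
      A *ᵥ gaussMix A S (fun f => p f • f) r - gaussMix A S p r • r := by
  have hmean := integrable_gaussD_smul (A := A) hS hpf r
  have hmass := (integrable_gaussD_smul (A := A) hS hp r).smul_const r
  simp only [gaussMix, smul_sub, ← smul_assoc, ← map_smul]
  rw [integral_sub ((mulVecL A).integrable_comp (by simpa only [smul_assoc] using hmean)) hmass,
    (mulVecL A).integral_comp_comm (by simpa only [smul_assoc] using hmean), integral_smul_const,
    mulVecL_apply]

lemma hasFDerivAt_gaussMix (hS : S.PosDef) (hp : Integrable p)
    (hpf : Integrable fun f => p f • f) (r : Fin d → ℝ) :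
    HasFDerivAt (gaussMix A S p)
      (dotProductL (S⁻¹ *ᵥ (A *ᵥ gaussMix A S (fun f => p f • f) r - gaussMix A S p r • r))) r := by
  let Φ : (Fin d → ℝ) →L[ℝ] (Fin d → ℝ) →L[ℝ] ℝ := dotProductL ∘L mulVecL S⁻¹
  let q (x : Fin d → ℝ) (f : Fin k → ℝ) : Fin d → ℝ := mulVecL A (p f • f) - p f • x
  have hq (x : Fin d → ℝ) : Integrable (q x) :=
    ((mulVecL A).integrable_comp hpf).sub (hp.smul_const x)
  have hderiv (x : Fin d → ℝ) (f : Fin k → ℝ) :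
      HasFDerivAt (fun x => gaussD d x (A *ᵥ f) S • p f) (Φ (gaussD d x (A *ᵥ f) S • q x f)) x := by
    refine ((hasFDerivAt_gaussD hS.isHermitian x (A *ᵥ f)).mul_const (p f)).congr_fderiv ?_
    simp only [Φ, q, ContinuousLinearMap.comp_apply, map_smul, ← smul_sub, mulVecL_apply]
    exact smul_comm _ _ _
  have hbound (f : Fin k → ℝ) (x : Fin d → ℝ) (hx : x ∈ Metric.ball r 1) :
      ‖Φ (gaussD d x (A *ᵥ f) S • q x f)‖ ≤
        ‖Φ‖ * (gaussD d 0 0 S * (‖mulVecL A (p f • f)‖ + ‖p f‖ * (‖r‖ + 1))) := by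
    have hxr : ‖x‖ ≤ ‖r‖ + 1 := by
      have := norm_sub_norm_le x r
      linarith [mem_ball_iff_norm.1 hx]
    refine (Φ.le_opNorm _).trans ?_
    rw [norm_smul, Real.norm_of_nonneg (gaussD_pos hS.det_pos _ _).le]
    gcongr
    · exact (gaussD_pos hS.det_pos _ _).le
    · exact gaussD_le_gaussD_self hS _ _ _
    · refine (norm_sub_le _ _).trans ?_
      rw [norm_smul]
      gcongr
  have hbound_int : Integrable fun f => ‖mulVecL A (p f • f)‖ + ‖p f‖ * (‖r‖ + 1) :=
    ((mulVecL A).integrable_comp hpf).norm.add (hp.norm.mul_const _)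
  have hmain := hasFDerivAt_integral_of_dominated_of_fderiv_le (Metric.ball_mem_nhds r one_pos)
    (.of_forall fun x => (integrable_gaussD_smul (A := A) hS hp x).aestronglyMeasurable)
    (integrable_gaussD_smul hS hp r)
    (Φ.integrable_comp (integrable_gaussD_smul hS (hq r) r)).aestronglyMeasurable
    (.of_forall hbound)
    (hbound_int.const_mul _ |>.const_mul _)
    (.of_forall fun f x _ => hderiv x f)
  rw [Φ.integral_comp_comm (integrable_gaussD_smul hS (hq r) r)] at hmain
  rwa [← gaussMix_mulVec_sub_smul hS hp hpf r]

lemma gradv_log_gaussMix (hS : S.PosDef) (hp : 0 ≤ p) (hp_pos : 0 < ∫ f, p f)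
    (hpf : Integrable fun f => p f • f) (r : Fin d → ℝ) :
    gradv (fun r => Real.log (gaussMix A S p r)) r =
      S⁻¹ *ᵥ (A *ᵥ posteriorMean A S p r - r) := by
  have hpos := gaussMix_pos (A := A) hS hp hp_pos r
  have hderiv := (hasFDerivAt_gaussMix (A := A) hS (.of_integral_ne_zero hp_pos.ne') hpf r).log
    hpos.ne'
  rw [← map_smul] at hderiv
  rw [gradv_eq_of_hasFDerivAt hderiv, posteriorMean, ← mulVec_smul, smul_sub, ← mulVec_smul,
    inv_smul_smul₀ hpos.ne']

end GaussianMixture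

lemma integrable_smul_self {n : ℕ} {p : (Fin n → ℝ) → ℝ} (hp : 0 ≤ p) (hp_int : Integrable p)
    (hp2 : Integrable fun f => eucNorm f ^ 2 * p f) : Integrable fun f => p f • f := by
  refine (hp_int.add hp2).mono' (hp_int.aestronglyMeasurable.smul aestronglyMeasurable_id)
    (.of_forall fun f => ?_)
  rw [norm_smul, Real.norm_of_nonneg (hp f), Pi.add_apply]
  have hle : ‖f‖ ≤ 1 + eucNorm f ^ 2 := by
    nlinarith [norm_le_eucNorm f, sq_nonneg (eucNorm f - 1)]
  nlinarith [mul_le_mul_of_nonneg_left hle (hp f)]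

section Posterior

variable {d k : ℕ} {A : Matrix (Fin d) (Fin k) ℝ} {S : Matrix (Fin d) (Fin d) ℝ}
  {p : (Fin k → ℝ) → ℝ}

lemma eucNorm_posteriorMean_sq_mul_le (hS : S.PosDef) (hp : 0 ≤ p) (hp_pos : 0 < ∫ f, p f)
    (hp2 : Integrable fun f => eucNorm f ^ 2 * p f) (r : Fin d → ℝ) :
    eucNorm (posteriorMean A S p r) ^ 2 * gaussMix A S p r ≤
      gaussMix A S (fun f => eucNorm f ^ 2 * p f) r := by
  have hp_int : Integrable p := .of_integral_ne_zero hp_pos.ne'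
  have hmean := integrable_gaussD_smul (A := A) hS (integrable_smul_self hp hp_int hp2) r
  have hmoment := integrable_gaussD_smul (A := A) hS hp2 r
  simp only [← smul_assoc] at hmean
  simp only [smul_eq_mul, mul_comm (eucNorm _ ^ 2), ← mul_assoc] at hmoment
  have hjensen := eucNorm_weightedMean_sq_mul_integral_le (F := fun f => f)
    (fun f => mul_nonneg (gaussD_pos hS.det_pos _ _).le (hp f))
    (gaussMix_pos (A := A) hS hp hp_pos r).ne' hmean hmoment
  simpa only [posteriorMean, gaussMix, ← smul_assoc, smul_eq_mul, mul_comm (eucNorm _ ^ 2),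
    mul_assoc] using hjensen

lemma aestronglyMeasurable_posteriorMean (hS : S.PosDef) (hp : Integrable p)
    (hpf : Integrable fun f => p f • f) : AEStronglyMeasurable (posteriorMean A S p) :=
  (integrable_gaussMix hS hp).aemeasurable.inv.aestronglyMeasurable.smul
    (integrable_gaussMix hS hpf).aestronglyMeasurable

lemma integrable_eucNorm_posteriorMean_sq_mul (hS : S.PosDef) (hp : 0 ≤ p)
    (hp_pos : 0 < ∫ f, p f) (hp2 : Integrable fun f => eucNorm f ^ 2 * p f) :
    Integrable fun r => eucNorm (posteriorMean A S p r) ^ 2 * gaussMix A S p r := by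
  have hp_int : Integrable p := .of_integral_ne_zero hp_pos.ne'
  have hmeas := aestronglyMeasurable_posteriorMean (A := A) hS hp_int
    (integrable_smul_self hp hp_int hp2)
  refine (integrable_gaussMix (A := A) hS hp2).mono' (((continuous_eucNorm.comp_aestronglyMeasurable
    hmeas).pow 2).mul (integrable_gaussMix hS hp_int).aestronglyMeasurable)
    (.of_forall fun r => ?_)
  rw [Real.norm_of_nonneg (mul_nonneg (sq_nonneg _) (gaussMix_pos hS hp hp_pos r).le)]
  exact eucNorm_posteriorMean_sq_mul_le hS hp hp_pos hp2 r

end Posterior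

section Sufficiency

variable {d k : ℕ} {β : Matrix (Fin d) (Fin k) ℝ} {S : Matrix (Fin d) (Fin d) ℝ}

/-- The generalised least squares estimate of `w` from `r = β w + noise` with noise covariance
`S`; it is a sufficient statistic for `w`. -/
def glsEstimate (β : Matrix (Fin d) (Fin k) ℝ) (S : Matrix (Fin d) (Fin d) ℝ) (r : Fin d → ℝ) :
    Fin k → ℝ :=
  (βᵀ * S⁻¹ * β)⁻¹ *ᵥ (βᵀ *ᵥ (S⁻¹ *ᵥ r))

lemma dotProduct_residual_eq_zero (hΓ : IsUnit (βᵀ * S⁻¹ * β).det) (r : Fin d → ℝ)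
    (v : Fin k → ℝ) : (β *ᵥ v) ⬝ᵥ (S⁻¹ *ᵥ (r - β *ᵥ glsEstimate β S r)) = 0 := by
  rw [dotProduct_comm, dotProduct_mulVec, ← mulVec_transpose, mulVec_sub, mulVec_sub, glsEstimate]
  simp only [mulVec_mulVec, ← Matrix.mul_assoc]
  rw [mul_nonsing_inv _ hΓ]
  simp

lemma residual_pythagoras (hS : S.IsSymm) (hΓ : IsUnit (βᵀ * S⁻¹ * β).det) (r : Fin d → ℝ)
    (w : Fin k → ℝ) :
    (r - β *ᵥ w) ⬝ᵥ (S⁻¹ *ᵥ (r - β *ᵥ w)) =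
      (r - β *ᵥ glsEstimate β S r) ⬝ᵥ (S⁻¹ *ᵥ (r - β *ᵥ glsEstimate β S r)) +
        (glsEstimate β S r - w) ⬝ᵥ ((βᵀ * S⁻¹ * β) *ᵥ (glsEstimate β S r - w)) := by
  have horth := dotProduct_residual_eq_zero hΓ r (glsEstimate β S r - w)
  have hsplit : r - β *ᵥ w = (r - β *ᵥ glsEstimate β S r) + β *ᵥ (glsEstimate β S r - w) := by
    rw [mulVec_sub]; abel
  have horth' : (r - β *ᵥ glsEstimate β S r) ⬝ᵥ (S⁻¹ *ᵥ (β *ᵥ (glsEstimate β S r - w))) = 0 := by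
    rw [dotProduct_inv_mulVec_comm hS, horth]
  rw [hsplit, mulVec_add, add_dotProduct, dotProduct_add, dotProduct_add, horth, horth', add_zero,
    zero_add, add_right_inj, dotProduct_mulVec, dotProduct_mulVec, dotProduct_mulVec,
    ← vecMul_vecMul, ← vecMul_vecMul, vecMul_transpose]

lemma gaussD_mulVec_mul_gaussD_self (hS : S.IsSymm) (hΓ : IsUnit (βᵀ * S⁻¹ * β).det)
    (r : Fin d → ℝ) (w : Fin k → ℝ) :
    gaussD d r (β *ᵥ w) S * gaussD k 0 0 (βᵀ * S⁻¹ * β)⁻¹ =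
      gaussD d r (β *ᵥ glsEstimate β S r) S *
        gaussD k (glsEstimate β S r) w (βᵀ * S⁻¹ * β)⁻¹ := by
  rw [gaussD_eq_gaussD_self_mul_exp 0 r, gaussD_eq_gaussD_self_mul_exp 0 r,
    gaussD_eq_gaussD_self_mul_exp 0 _ w, nonsing_inv_nonsing_inv _ hΓ, residual_pythagoras hS hΓ,
    neg_add, add_div, Real.exp_add]
  ring

lemma posDef_transpose_mul_inv_mul (hS : S.PosDef) (hβ : Function.Injective β.mulVec) :
    (βᵀ * S⁻¹ * β).PosDef := by
  simpa only [conjTranspose_eq_transpose_of_trivial] using hS.inv.conjTranspose_mul_mul_same hβ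

lemma gaussMix_mul {E : Type*} [NormedAddCommGroup E] [NormedSpace ℝ E] (hS : S.PosDef)
    (hβ : Function.Injective β.mulVec) (C : Matrix (Fin k) (Fin k) ℝ) (q : (Fin k → ℝ) → E)
    (r : Fin d → ℝ) :
    gaussMix (β * C) S q r =
      (gaussD d r (β *ᵥ glsEstimate β S r) S / gaussD k 0 0 (βᵀ * S⁻¹ * β)⁻¹) •
        gaussMix C (βᵀ * S⁻¹ * β)⁻¹ q (glsEstimate β S r) := by
  have hΓ := posDef_transpose_mul_inv_mul hS hβ
  simp only [gaussMix, ← integral_smul, ← mulVec_mulVec, smul_smul, div_mul_eq_mul_div,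
    ← gaussD_mulVec_mul_gaussD_self (isHermitian_iff_isSymm.1 hS.isHermitian) hΓ.det_pos.ne'.isUnit,
    mul_div_cancel_right₀ _ (gaussD_pos (n := k) hΓ.inv.det_pos 0 0).ne']

lemma posteriorMean_mul (hS : S.PosDef) (hβ : Function.Injective β.mulVec)
    (C : Matrix (Fin k) (Fin k) ℝ) (p : (Fin k → ℝ) → ℝ) (r : Fin d → ℝ) :
    posteriorMean (β * C) S p r =
      posteriorMean C (βᵀ * S⁻¹ * β)⁻¹ p (glsEstimate β S r) := by
  have hc : gaussD d r (β *ᵥ glsEstimate β S r) S / gaussD k 0 0 (βᵀ * S⁻¹ * β)⁻¹ ≠ 0 :=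
    div_ne_zero (gaussD_pos hS.det_pos _ _).ne'
      (gaussD_pos (posDef_transpose_mul_inv_mul hS hβ).inv.det_pos _ _).ne'
  rw [posteriorMean, posteriorMean, gaussMix_mul hS hβ, gaussMix_mul hS hβ, smul_eq_mul, mul_inv,
    mul_comm, mul_smul, inv_smul_smul₀ hc]

end Sufficiency

section FactorModel

variable {d k : ℕ} {β : Matrix (Fin d) (Fin k) ℝ} {σ : Fin d → ℝ} {p : (Fin k → ℝ) → ℝ} {t : ℝ}

lemma af_pos (t : ℝ) : 0 < af t := Real.exp_pos _

lemma af_le_one (ht : 0 ≤ t) : af t ≤ 1 := Real.exp_le_one_iff.2 (by linarith)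

lemma le_hf_add_mul_af_sq {m s : ℝ} (hm : m ≤ 1) (hms : m ≤ s) (ht : 0 ≤ t) :
    m ≤ hf t + s * af t ^ 2 := by
  have haf : af t ^ 2 ≤ 1 := pow_le_one₀ (af_pos t).le (af_le_one ht)
  unfold hf
  nlinarith [sq_nonneg (af t)]

lemma posDef_Lam (hΛ : ∀ i, 0 < hf t + σ i ^ 2 * af t ^ 2) : (Lam σ t).PosDef :=
  posDef_diagonal_iff.2 hΛ

lemma injective_mulVec_of_transpose_mul_self_eq_one (hβ : βᵀ * β = 1) :
    Function.Injective β.mulVec :=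
  Function.LeftInverse.injective (g := βᵀ.mulVec) fun v => by
    rw [mulVec_mulVec, hβ, one_mulVec]

lemma pT_eq_gaussMix : pT β σ p t = gaussMix (af t • β) (Lam σ t) p := by
  ext r
  simp only [pT, gaussMix, smul_mulVec, smul_eq_mul]

lemma xiFun_eq_posteriorMean (hΛ : (Lam σ t).PosDef) (hβ : Function.Injective β.mulVec)
    (r : Fin d → ℝ) :
    xiFun β σ p t (βᵀ *ᵥ ((Lam σ t)⁻¹ *ᵥ r)) = posteriorMean (af t • β) (Lam σ t) p r := by
  have hfactor : af t • β = β * af t • (1 : Matrix (Fin k) (Fin k) ℝ) := by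
    rw [Matrix.mul_smul, Matrix.mul_one]
  rw [hfactor, posteriorMean_mul hΛ hβ]
  simp only [xiFun, posteriorMean, gaussMix, glsEstimate, Gam, smul_mulVec, one_mulVec, smul_smul,
    smul_eq_mul]

lemma score_error_eq (hΛ : (Lam σ t).PosDef) (hβ : Function.Injective β.mulVec) (hp : 0 ≤ p)
    (hp_pos : 0 < ∫ f, p f) (hpf : Integrable fun f => p f • f) (v : Fin k → ℝ) (r : Fin d → ℝ) :
    af t • (((Lam σ t)⁻¹ * β) *ᵥ v) - (Lam σ t)⁻¹ *ᵥ r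
        - gradv (fun r => Real.log (pT β σ p t r)) r =
      af t • (((Lam σ t)⁻¹ * β) *ᵥ (v - xiFun β σ p t (βᵀ *ᵥ ((Lam σ t)⁻¹ *ᵥ r)))) := by
  rw [xiFun_eq_posteriorMean hΛ hβ, pT_eq_gaussMix, gradv_log_gaussMix hΛ hp hp_pos hpf,
    mulVec_sub, mulVec_sub, smul_mulVec, mulVec_smul, mulVec_mulVec, smul_sub]
  abel

lemma mul_eucNorm_af_smul_le {m : ℝ} (hm : 0 < m) (hΛ : ∀ i, m ≤ hf t + σ i ^ 2 * af t ^ 2)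
    (hβ : βᵀ * β = 1) (ht : 0 ≤ t) (v : Fin k → ℝ) :
    m * eucNorm (af t • (((Lam σ t)⁻¹ * β) *ᵥ v)) ≤ eucNorm v := by
  have hunit : IsUnit (Lam σ t).det := (posDef_Lam fun i => hm.trans_le (hΛ i)).det_pos.ne'.isUnit
  calc m * eucNorm (af t • (((Lam σ t)⁻¹ * β) *ᵥ v))
      ≤ m * eucNorm (((Lam σ t)⁻¹ * β) *ᵥ v) := by
        rw [eucNorm_smul, abs_of_pos (af_pos t)]
        gcongr
        exact mul_le_of_le_one_left (eucNorm_nonneg _) (af_le_one ht)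
    _ ≤ eucNorm (Lam σ t *ᵥ (((Lam σ t)⁻¹ * β) *ᵥ v)) :=
        mul_eucNorm_le_eucNorm_diagonal_mulVec hm.le hΛ _
    _ = eucNorm v := by
        rw [mulVec_mulVec, mul_nonsing_inv_cancel_left _ _ hunit,
          eucNorm_mulVec_of_transpose_mul_self_eq_one hβ]

lemma pT_pos (hΛ : (Lam σ t).PosDef) (hp : 0 ≤ p) (hp_pos : 0 < ∫ f, p f) (r : Fin d → ℝ) :
    0 < pT β σ p t r := by
  rw [pT_eq_gaussMix]
  exact gaussMix_pos hΛ hp hp_pos r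

lemma integral_pT (hΛ : (Lam σ t).PosDef) (hp : Integrable p) : ∫ r, pT β σ p t r = ∫ f, p f := by
  rw [pT_eq_gaussMix, integral_gaussMix hΛ hp]

lemma aestronglyMeasurable_comp_sub_xiFun (hΛ : (Lam σ t).PosDef)
    (hβ : Function.Injective β.mulVec) (hp : Integrable p) (hpf : Integrable fun f => p f • f)
    {g : (Fin k → ℝ) → Fin k → ℝ} (hg : Measurable g) :
    AEStronglyMeasurable fun r => g (βᵀ *ᵥ ((Lam σ t)⁻¹ *ᵥ r)) -
      xiFun β σ p t (βᵀ *ᵥ ((Lam σ t)⁻¹ *ᵥ r)) := by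
  have hZ : Continuous fun r => βᵀ *ᵥ ((Lam σ t)⁻¹ *ᵥ r) := by fun_prop
  simp only [xiFun_eq_posteriorMean hΛ hβ]
  exact (hg.comp hZ.measurable).aestronglyMeasurable.sub
    (aestronglyMeasurable_posteriorMean hΛ hp hpf)

lemma integrable_eucNorm_xiFun_sq_mul_pT (hΛ : (Lam σ t).PosDef)
    (hβ : Function.Injective β.mulVec) (hp : 0 ≤ p) (hp_pos : 0 < ∫ f, p f)
    (hp2 : Integrable fun f => eucNorm f ^ 2 * p f) :
    Integrable fun r =>
      eucNorm (xiFun β σ p t (βᵀ *ᵥ ((Lam σ t)⁻¹ *ᵥ r))) ^ 2 * pT β σ p t r := by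
  simp only [xiFun_eq_posteriorMean hΛ hβ, pT_eq_gaussMix]
  exact integrable_eucNorm_posteriorMean_sq_mul hΛ hp hp_pos hp2

end FactorModel

theorem score_approximation_from_xi_approximation_general {d k : ℕ}
    {β : Matrix (Fin d) (Fin k) ℝ} (hβ : βᵀ * β = 1) {pfac : (Fin k → ℝ) → ℝ} (hp : 0 ≤ pfac)
    (hp_one : ∫ f, pfac f = 1) (hp_moment : Integrable fun f => eucNorm f ^ 2 * pfac f)
    {σ : Fin d → ℝ} {m : ℝ} (hm : 0 < m) (hm_one : m ≤ 1) (hσ : ∀ i, m ≤ σ i ^ 2)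
    {ε S t : ℝ} (hε : 0 ≤ ε) (ht : 0 ≤ t) {g : (Fin k → ℝ) → Fin k → ℝ} (hg : Measurable g)
    (hg_zero : ∀ z, S < eucNorm z → g z = 0)
    (hg_approx : ∀ z, eucNorm z ≤ S → ∀ i, |g z i - xiFun β σ pfac t z i| ≤ ε)
    (htrunc : ∫ r, Set.indicator {r | S < eucNorm (βᵀ *ᵥ ((Lam σ t)⁻¹ *ᵥ r))}
      (fun r => eucNorm (xiFun β σ pfac t (βᵀ *ᵥ ((Lam σ t)⁻¹ *ᵥ r))) ^ 2 * pT β σ pfac t r) r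
        ≤ ε ^ 2) :
    Integrable (fun r => eucNorm (af t • (((Lam σ t)⁻¹ * β) *ᵥ g (βᵀ *ᵥ ((Lam σ t)⁻¹ *ᵥ r)))
        - (Lam σ t)⁻¹ *ᵥ r - gradv (fun r => Real.log (pT β σ pfac t r)) r) ^ 2
          * pT β σ pfac t r) ∧
      √(∫ r, eucNorm (af t • (((Lam σ t)⁻¹ * β) *ᵥ g (βᵀ *ᵥ ((Lam σ t)⁻¹ *ᵥ r)))
        - (Lam σ t)⁻¹ *ᵥ r - gradv (fun r => Real.log (pT β σ pfac t r)) r) ^ 2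
          * pT β σ pfac t r) ≤ √(k + 1) * ε / m := by
  have hvar (i : Fin d) : m ≤ hf t + σ i ^ 2 * af t ^ 2 := le_hf_add_mul_af_sq hm_one (hσ i) ht
  have hΛ : (Lam σ t).PosDef := posDef_Lam fun i => hm.trans_le (hvar i)
  have hβ_inj := injective_mulVec_of_transpose_mul_self_eq_one hβ
  have hp_pos : 0 < ∫ f, pfac f := hp_one ▸ one_pos
  have hp_int : Integrable pfac := .of_integral_ne_zero hp_pos.ne'
  have hpf := integrable_smul_self hp hp_int hp_moment
  have hP (r : Fin d → ℝ) : 0 ≤ pT β σ pfac t r := (pT_pos hΛ hp hp_pos r).le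
  have hP_one : ∫ r, pT β σ pfac t r = 1 := (integral_pT hΛ hp_int).trans hp_one
  have htail : MeasurableSet {r | S < eucNorm (βᵀ *ᵥ ((Lam σ t)⁻¹ *ᵥ r))} :=
    (isOpen_lt continuous_const (continuous_eucNorm.comp (by fun_prop))).measurableSet
  have herr_meas := aestronglyMeasurable_comp_sub_xiFun hΛ hβ_inj hp_int hpf hg
  obtain ⟨herr_int, herr⟩ := integrable_and_integral_eucNorm_sub_sq_mul_le htail hP hP_one
    herr_meas (integrable_eucNorm_xiFun_sq_mul_pT hΛ hβ_inj hp hp_pos hp_moment)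
    (fun r hr => hg_zero _ hr) (fun r hr => hg_approx _ (not_lt.1 hr)) htrunc
  simp only [score_error_eq hΛ hβ_inj hp hp_pos hpf]
  have hL : Continuous fun v => eucNorm (af t • (((Lam σ t)⁻¹ * β) *ᵥ v)) :=
    continuous_eucNorm.comp (by fun_prop)
  obtain ⟨hint, hle⟩ := integrable_and_mul_sqrt_integral_sq_mul_le hm hP
    (fun r => eucNorm_nonneg _) (fun r => mul_eucNorm_af_smul_le hm hvar hβ ht _)
    (((hL.comp_aestronglyMeasurable herr_meas).pow 2).mul
      (integrable_of_integral_eq_one hP_one).aestronglyMeasurable) herr_int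
  refine ⟨hint, (le_div_iff₀' hm).2 (hle.trans ?_)⟩
  rw [← Real.sqrt_sq hε, ← Real.sqrt_mul (by positivity)]
  exact Real.sqrt_le_sqrt herr

/-- score approximation from an approximation of `ξ`. -/
theorem score_approximation_from_xi_approximation
    (d k : ℕ) (hk1 : 1 ≤ k) (hkd : k ≤ d)
    (β : Matrix (Fin d) (Fin k) ℝ) (hβ : βᵀ * β = 1)
    (pfac : (Fin k → ℝ) → ℝ)
    (hpfac_nonneg : ∀ f, 0 ≤ pfac f)
    (hpfac_prob : (∫ f : Fin k → ℝ, pfac f) = 1)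
    (hpfac_smooth : ContDiff ℝ 2 pfac)
    (hpfac_mom : Integrable (fun f : Fin k → ℝ => eucNorm f ^ 2 * pfac f))
    (σ : Fin d → ℝ) (σmax : ℝ)
    (hσpos : ∀ i, 0 < σ i)
    (hσdec : ∀ i j : Fin d, i ≤ j → σ j ≤ σ i)
    (hσmax : ∀ i, σ i ≤ σmax)
    (ε T S : ℝ) (hε : ε ∈ Set.Ioo (0 : ℝ) 1) (hT : 0 < T) (hS : 0 < S)
    (g : (Fin k → ℝ) → ℝ → (Fin k → ℝ))
    (hgmeas : Measurable fun p : (Fin k → ℝ) × ℝ => g p.1 p.2)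
    (hgzero : ∀ z : Fin k → ℝ, ∀ t ∈ Set.Icc (0 : ℝ) T, S < eucNorm z → g z t = 0)
    (hgapprox : ∀ z : Fin k → ℝ, ∀ t ∈ Set.Icc (0 : ℝ) T, eucNorm z ≤ S →
      ∀ i : Fin k, |g z t i - xiFun β σ pfac t z i| ≤ ε)
    (htrunc : ∀ t ∈ Set.Icc (0 : ℝ) T,
      (∫ r : Fin d → ℝ,
          Set.indicator
            {r' : Fin d → ℝ | S < eucNorm (βᵀ *ᵥ ((Lam σ t)⁻¹ *ᵥ r'))}
            (fun r' =>
              eucNorm (xiFun β σ pfac t (βᵀ *ᵥ ((Lam σ t)⁻¹ *ᵥ r'))) ^ 2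
                * pT β σ pfac t r') r)
        ≤ ε ^ 2) :
    ∀ t ∈ Set.Icc (0 : ℝ) T,
      Real.sqrt
          (∫ r : Fin d → ℝ,
            eucNorm
                ((af t • (((Lam σ t)⁻¹ * β) *ᵥ g (βᵀ *ᵥ ((Lam σ t)⁻¹ *ᵥ r)) t)
                    - (Lam σ t)⁻¹ *ᵥ r)
                  - gradv (fun r' => Real.log (pT β σ pfac t r')) r) ^ 2
              * pT β σ pfac t r)
        ≤ (Real.sqrt k + 1) * ε / min (σ ⟨d - 1, by omega⟩ ^ 2) 1 := by
  intro t ht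
  have hd (i : Fin d) : σ ⟨d - 1, by omega⟩ ^ 2 ≤ σ i ^ 2 :=
    pow_le_pow_left₀ (hσpos _).le (hσdec _ _ (Fin.mk_le_mk.2 (by omega))) 2
  have hm : 0 < min (σ ⟨d - 1, by omega⟩ ^ 2) 1 := lt_min (pow_pos (hσpos _) 2) one_pos
  have hsqrt : √(k + 1) ≤ √k + 1 := by
    refine Real.sqrt_le_iff.2 ⟨by positivity, ?_⟩
    nlinarith [Real.sq_sqrt (k.cast_nonneg : (0 : ℝ) ≤ k), Real.sqrt_nonneg (k : ℝ)]
  refine (score_approximation_from_xi_approximation_general hβ hpfac_nonneg hpfac_prob hpfac_mom hm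
    (min_le_right _ _) (fun i => (min_le_left _ _).trans (hd i)) hε.1.le ht.1
    (hgmeas.comp measurable_prodMk_right) (fun z => hgzero z t ht)
    (fun z => hgapprox z t ht) (htrunc t ht)).2.trans ?_
  gcongr
  exact hε.1.le
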